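/- Let φ : B → A be a homomorphism of Artin algebras preserving identities such that 2 ≤ fd(φ) = n < ∞, where fd(φ) is the relative finitistic dimension of φ. Suppose that A has finite projective dimension as a left B-module, that A is projective as a right B-module, and that the finitistic dimension of B is finite, say fin.dim(B) = m. Then the finitistic dimension of A is finite; moreover fin.dim(A) ≤ m + n. -/

import Mathlib

/-!
Let `ΩX` be the kernel of the counit `A ⊗_B X → X`, which splits over `B`. Restriction along `φ`
raises projective dimensions by at most `pd_B A`, and `A ⊗_B -` is exact and preserves projectives
because `A` is projective on the right. Hence `pd_A X < ∞` gives `pd_B X ≤ m`, then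
`pd_A (A ⊗_B X) ≤ m`, and finally `pd_A ΩX < ∞`, so that every `Ω^i X` satisfies
`pd_A (A ⊗_B Ω^i X) ≤ m`. A relative form of Schanuel's lemma compares the syzygies `Ω^i X` with
those of any `(A,B)`-exact resolution of length `n`, whence `Ω^n X` is a direct summand of
`A ⊗_B Ω^n X` and has projective dimension at most `m`. Each of the `n` sequences
`0 → Ω^(i+1) X → A ⊗_B Ω^i X → Ω^i X → 0` then adds at most one.
-/

universe u

open TensorProduct

section Basic

variable (Λ : Type u) [Ring Λ]

/-- `ProjDimLE Λ n M` : the module `M` admits a projective resolution of length `≤ n`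
by finitely generated projective `Λ`-modules. -/
def ProjDimLE : ℕ → ModuleCat.{u} Λ → Prop
  | 0, M => Module.Projective Λ M
  | n + 1, M => ∃ (P : ModuleCat.{u} Λ) (g : P →ₗ[Λ] M),
      Module.Projective Λ P ∧ Module.Finite Λ P ∧ Function.Surjective g ∧
      ProjDimLE n (ModuleCat.of Λ (LinearMap.ker g))

/-- The finitistic dimension of `Λ` (computed on finitely generated modules) is finite. -/
def FinFinDim : Prop :=
  ∃ n : ℕ, ∀ M : ModuleCat.{u} Λ, Module.Finite Λ M →
    (∃ k : ℕ, ProjDimLE Λ k M) → ProjDimLE Λ n M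

/-- A module is indecomposable. -/
def ModIndec (M : ModuleCat.{u} Λ) : Prop :=
  Nontrivial M ∧ ∀ N₁ N₂ : Submodule Λ M, IsCompl N₁ N₂ → N₁ = ⊥ ∨ N₂ = ⊥

/-- A class of modules has only finitely many isomorphism classes of indecomposables. -/
def ClassRepFinite (C : ModuleCat.{u} Λ → Prop) : Prop :=
  ∃ (k : ℕ) (N : Fin k → ModuleCat.{u} Λ),
    ∀ M : ModuleCat.{u} Λ, C M → ModIndec Λ M → ∃ i, Nonempty (M ≃ₗ[Λ] N i)

/-- `Λ` is representation-finite. -/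
def RepFinite : Prop :=
  ClassRepFinite Λ (fun M => Module.Finite Λ M)

/-- `X` belongs to `add N`: it is a direct summand of a finite direct sum of copies of `N`. -/
def InAdd (N X : ModuleCat.{u} Λ) : Prop :=
  ∃ (k : ℕ) (i : X →ₗ[Λ] (Fin k → N)) (p : (Fin k → N) →ₗ[Λ] X),
    p.comp i = LinearMap.id

/-- A submodule is superfluous (small). -/
def IsSuperfluous {M : ModuleCat.{u} Λ} (N : Submodule Λ M) : Prop :=
  ∀ L : Submodule Λ M, L ⊔ N = ⊤ → L = ⊤

/-- `K` is (isomorphic to) the kernel of a projective cover of `M`, i.e. a first syzygy. -/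
def IsSyzygyOf (K M : ModuleCat.{u} Λ) : Prop :=
  ∃ (P : ModuleCat.{u} Λ) (g : P →ₗ[Λ] M), Module.Projective Λ P ∧ Module.Finite Λ P ∧
    Function.Surjective g ∧ IsSuperfluous Λ (LinearMap.ker g) ∧
    Nonempty (K ≃ₗ[Λ] LinearMap.ker g)

/-- `K` is an `n`-th syzygy of `M`. -/
def IsNthSyzygy : ℕ → ModuleCat.{u} Λ → ModuleCat.{u} Λ → Prop
  | 0, K, M => Nonempty (K ≃ₗ[Λ] M)
  | n + 1, K, M => ∃ K' : ModuleCat.{u} Λ, IsNthSyzygy n K' M ∧ IsSyzygyOf Λ K K'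

/-- A class `C` of modules is `m`-syzygy-finite. -/
def MSyzygyFiniteClass (m : ℕ) (C : ModuleCat.{u} Λ → Prop) : Prop :=
  ∃ N : ModuleCat.{u} Λ, Module.Finite Λ N ∧
    ∀ X, C X → ∀ K, IsNthSyzygy Λ m K X → InAdd Λ N K

/-- A class `C` of modules is syzygy-finite. -/
def SyzygyFiniteClass (C : ModuleCat.{u} Λ → Prop) : Prop :=
  ∃ m : ℕ, MSyzygyFiniteClass Λ m C

/-- `Λ` is 1-syzygy-finite. -/
def OneSyzygyFinite : Prop :=
  MSyzygyFiniteClass Λ 1 (fun X => Module.Finite Λ X)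

/-- `Λ` is syzygy-finite. -/
def AlgSyzygyFinite : Prop :=
  SyzygyFiniteClass Λ (fun X => Module.Finite Λ X)

/-- The Jacobson radical of `Λ` (intersection of the maximal left ideals). -/
def jacobsonRad : Ideal Λ := sInf {I : Ideal Λ | I.IsMaximal}

end Basic

/-- The Jacobson radical of a subalgebra, as a subset of the ambient algebra. -/
def radSet {R A : Type u} [CommRing R] [Ring A] [Algebra R A] (S : Subalgebra R A) : Set A :=
  Subtype.val '' ((jacobsonRad ↥S : Ideal ↥S) : Set ↥S)

section Rel

variable {R : Type u} [CommRing R] {B A : Type u} [Ring B] [Ring A]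
  [Algebra R B] [Algebra R A] (φ : B →ₐ[R] A)

/-- The tensor product `A ⊗_B X` of the (A,B)-bimodule `A` with a left `A`-module `X`
(viewed as a `B`-module via `φ`), realized as a quotient of `A ⊗_R X`. -/
noncomputable def relTensor (X : ModuleCat.{u} A) : ModuleCat.{u} A :=
  letI : Module R X := Module.compHom X (algebraMap R A)
  ModuleCat.of A ((A ⊗[R] X) ⧸ Submodule.span A
    {z : A ⊗[R] X | ∃ (a : A) (b : B) (x : X),
      z = (a * φ b) ⊗ₜ[R] x - a ⊗ₜ[R] (φ b • x)})

/-- `X` is `(A,B)`-projective: a direct summand of `A ⊗_B X`. -/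
noncomputable def RelProjective (X : ModuleCat.{u} A) : Prop :=
  ∃ (i : X →ₗ[A] relTensor φ X) (p : relTensor φ X →ₗ[A] X), p.comp i = LinearMap.id

/-- The map `g` admits a `B`-linear map `h` with `g ∘ h ∘ g = g`
(this encodes `(A,B)`-exactness of the corresponding short exact sequence). -/
def RelSplitB {P X : ModuleCat.{u} A} (g : P →ₗ[A] X) : Prop :=
  ∃ h : X →+ P, (∀ (b : B) (x : X), h (φ b • x) = φ b • h x) ∧
    ∀ p : P, g (h (g p)) = g p

/-- `RelProjDimLE φ n X` : `X` has an `(A,B)`-exact resolution of length `≤ n` by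
finitely generated `(A,B)`-projective modules, i.e. relative projective dimension `≤ n`. -/
noncomputable def RelProjDimLE : ℕ → ModuleCat.{u} A → Prop
  | 0, X => RelProjective φ X
  | n + 1, X => ∃ (P : ModuleCat.{u} A) (g : P →ₗ[A] X),
      RelProjective φ P ∧ Module.Finite A P ∧ Function.Surjective g ∧ RelSplitB φ g ∧
      RelProjDimLE n (ModuleCat.of A (LinearMap.ker g))

/-- Restriction of scalars along `φ` of an `A`-module, as an object of `ModuleCat B`. -/
def resMod (X : ModuleCat.{u} A) : ModuleCat.{u} B :=
  @ModuleCat.of B _ X _ (Module.compHom X φ.toRingHom)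

/-- The right `B`-module structure on `A` induced by `φ`. -/
def rightModB : Module Bᵐᵒᵖ A :=
  Module.compHom A (RingHom.op φ.toRingHom)

end Rel

variable {R : Type u} [CommRing R] [IsArtinianRing R]
  {B A : Type u} [Ring B] [Ring A] [Algebra R B] [Algebra R A]
  [Module.Finite R B] [Module.Finite R A]

open CategoryTheory

section ProjectiveDimension

variable {Λ : Type u} [Ring Λ]

theorem hasProjectiveDimensionLE_zero_iff (X : ModuleCat.{u} Λ) :
    HasProjectiveDimensionLE X 0 ↔ Module.Projective Λ X := by
  rw [← projective_iff_hasProjectiveDimensionLE_zero, ← IsProjective.iff_projective]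

theorem hasProjectiveDimensionLE_of_comp_eq_id {X Y : ModuleCat.{u} Λ} {i : X →ₗ[Λ] Y}
    {p : Y →ₗ[Λ] X} (h : p ∘ₗ i = LinearMap.id) (n : ℕ) [HasProjectiveDimensionLE Y n] :
    HasProjectiveDimensionLE X n :=
  Retract.hasProjectiveDimensionLT
    { i := ModuleCat.ofHom i, r := ModuleCat.ofHom p, retract := ModuleCat.hom_ext h } _

theorem hasProjectiveDimensionLE_fin_fun (M : ModuleCat.{u} Λ) (d : ℕ)
    [HasProjectiveDimensionLE M d] (n : ℕ) :
    HasProjectiveDimensionLE (ModuleCat.of Λ (Fin n → M)) d := by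
  induction n with
  | zero =>
    have := (ModuleCat.isZero_of_subsingleton
      (ModuleCat.of Λ (Fin 0 → M))).hasProjectiveDimensionLT_zero
    exact hasProjectiveDimensionLT_of_ge _ 0 _ (Nat.zero_le _)
  | succ n ih =>
    exact hasProjectiveDimensionLT_of_iso
      (ModuleCat.biprodIsoProd M (ModuleCat.of Λ (Fin n → M)) ≪≫
        (Fin.consLinearEquiv Λ fun _ : Fin (n + 1) => M).toModuleIso) (d + 1)

theorem ProjDimLE.hasProjectiveDimensionLE {n : ℕ} {X : ModuleCat.{u} Λ}
    (h : ProjDimLE Λ n X) : HasProjectiveDimensionLE X n := by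
  induction n generalizing X with
  | zero => exact (hasProjectiveDimensionLE_zero_iff X).2 h
  | succ n ih =>
    obtain ⟨P, g, hP, -, hg, hK⟩ := h
    have hP := (IsProjective.iff_projective P).1 hP
    exact ((LinearMap.shortExact_shortComplexKer hg).hasProjectiveDimensionLT_X₃_iff n hP).2 (ih hK)

theorem ProjDimLE.of_hasProjectiveDimensionLE [IsNoetherianRing Λ] {n : ℕ} {X : ModuleCat.{u} Λ}
    [Module.Finite Λ X] (h : HasProjectiveDimensionLE X n) : ProjDimLE Λ n X := by
  induction n generalizing X with
  | zero => exact (hasProjectiveDimensionLE_zero_iff X).1 h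
  | succ n ih =>
    obtain ⟨l, g, hg⟩ := Module.Finite.exists_fin' Λ X
    have hP : Projective (ModuleCat.of Λ (Fin l → Λ)) := (IsProjective.iff_projective _).1
      (inferInstanceAs (Module.Projective Λ (Fin l → Λ)))
    exact ⟨ModuleCat.of Λ (Fin l → Λ), g, inferInstanceAs (Module.Projective Λ (Fin l → Λ)),
      inferInstanceAs (Module.Finite Λ (Fin l → Λ)), hg,
      ih (((LinearMap.shortExact_shortComplexKer hg).hasProjectiveDimensionLT_X₃_iff n hP).1 h)⟩

end ProjectiveDimension

section Restriction

variable {k : Type u} [CommRing k] [Algebra k B] [Algebra k A] (φ : B →ₐ[k] A)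

instance (X : ModuleCat.{u} A) : Module k (resMod φ X) :=
  Module.compHom X (algebraMap k A)

instance (X : ModuleCat.{u} A) : IsScalarTower k B (resMod φ X) :=
  .of_algebraMap_smul fun r x =>
    congrArg (fun a : A => a • (show X from x)) (φ.commutes r)

/-- The restriction of an `A`-linear map to a `B`-linear map along `φ`. -/
def resHom {X Y : ModuleCat.{u} A} (f : X →ₗ[A] Y) : resMod φ X →ₗ[B] resMod φ Y where
  toFun := f
  map_add' := f.map_add
  map_smul' b x := f.map_smul (φ b) x

theorem shortExact_resHom_ker {X Y : ModuleCat.{u} A} {g : X →ₗ[A] Y}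
    (hg : Function.Surjective g) :
    (ModuleCat.shortComplexOfCompEqZero
      (resHom φ (X := ModuleCat.of A (LinearMap.ker g)) (LinearMap.ker g).subtype) (resHom φ g)
      (LinearMap.ext Subtype.prop)).ShortExact :=
  ModuleCat.shortComplex_shortExact _ (LinearMap.exact_subtype_ker_map g) Subtype.val_injective hg

theorem finite_resMod (hA : Module.Finite B (resMod φ (ModuleCat.of A A))) (X : ModuleCat.{u} A)
    [Module.Finite A X] : Module.Finite B (resMod φ X) := by
  let _ : Module B A := Module.compHom A φ.toRingHom
  let _ : Module B X := Module.compHom X φ.toRingHom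
  have : IsScalarTower B A X := ⟨fun b a x => mul_smul (φ b) a x⟩
  have : Module.Finite B A := hA
  exact Module.Finite.trans (R := B) A X

theorem isNoetherianRing_of_finite_resMod [IsNoetherianRing B]
    (hA : Module.Finite B (resMod φ (ModuleCat.of A A))) : IsNoetherianRing A := by
  let _ : Module B A := Module.compHom A φ.toRingHom
  have : IsScalarTower B A A := ⟨fun b a a' => mul_assoc (φ b) a a'⟩
  have : Module.Finite B A := hA
  exact .of_finite B A

theorem finite_resMod_self [Module.Finite k A] :
    Module.Finite B (resMod φ (ModuleCat.of A A)) := by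
  let _ : Module B A := Module.compHom A φ.toRingHom
  have : IsScalarTower k B A := .of_algebraMap_smul fun r a => by
    rw [Algebra.smul_def, ← φ.commutes]
    rfl
  exact Module.Finite.of_restrictScalars_finite k B A

theorem hasProjectiveDimensionLE_resMod_of_projective {d : ℕ}
    (hd : HasProjectiveDimensionLE (resMod φ (ModuleCat.of A A)) d) (P : ModuleCat.{u} A)
    [Module.Finite A P] [Module.Projective A P] : HasProjectiveDimensionLE (resMod φ P) d := by
  obtain ⟨n, p, i, -, -, hpi⟩ := Module.Finite.exists_comp_eq_id_of_projective A P
  have : HasProjectiveDimensionLE (resMod φ (ModuleCat.of A (Fin n → A))) d :=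
    hasProjectiveDimensionLE_fin_fun (resMod φ (ModuleCat.of A A)) d n
  exact hasProjectiveDimensionLE_of_comp_eq_id
    (i := resHom φ (Y := ModuleCat.of A (Fin n → A)) i)
    (p := resHom φ (X := ModuleCat.of A (Fin n → A)) p) (LinearMap.ext fun x => congr($hpi x)) d

theorem ProjDimLE.hasProjectiveDimensionLE_resMod [IsNoetherianRing A] {d : ℕ}
    (hd : HasProjectiveDimensionLE (resMod φ (ModuleCat.of A A)) d) {l : ℕ}
    {X : ModuleCat.{u} A} [Module.Finite A X] (h : ProjDimLE A l X) :
    HasProjectiveDimensionLE (resMod φ X) (d + l) := by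
  induction l generalizing X with
  | zero =>
    have : Module.Projective A X := h
    exact hasProjectiveDimensionLE_resMod_of_projective φ hd X
  | succ l ih =>
    obtain ⟨P, g, _, _, hg, hK⟩ := h
    have := hasProjectiveDimensionLE_resMod_of_projective φ hd P
    exact (shortExact_resHom_ker φ hg).hasProjectiveDimensionLT_X₃ (d + l + 1) (ih hK)
      (hasProjectiveDimensionLT_of_ge _ (d + 1) _ (by lia))

theorem exists_semilinearMap_lift {σ : B →+* A} {Y M N : Type*} [AddCommGroup Y] [Module B Y]
    [Module.Projective B Y] [AddCommGroup M] [Module A M] [AddCommGroup N] [Module A N]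
    {g : M →ₗ[A] N} (hg : Function.Surjective g) (f : Y →ₛₗ[σ] N) :
    ∃ l : Y →ₛₗ[σ] M, g.comp l = f := by
  let _ : Module B M := Module.compHom M σ
  let _ : Module B N := Module.compHom N σ
  let gB : M →ₗ[B] N := { g with map_smul' := fun b x => g.map_smul (σ b) x }
  let fB : Y →ₗ[B] N := { f with map_smul' := f.map_smulₛₗ }
  obtain ⟨l, hl⟩ := Module.projective_lifting_property gB fB hg
  exact ⟨{ l with map_smul' := l.map_smul }, LinearMap.ext fun y => congr($hl y)⟩

end Restriction

theorem exact_finsupp_mapRange_linearMap {Λ W Y Z : Type*} [Ring Λ] [AddCommGroup W] [Module Λ W]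
    [AddCommGroup Y] [Module Λ Y] [AddCommGroup Z] [Module Λ Z] {i : W →ₗ[Λ] Y} {g : Y →ₗ[Λ] Z}
    (h : Function.Exact i g) (ι : Type*) :
    Function.Exact (Finsupp.mapRange.linearMap (α := ι) i) (Finsupp.mapRange.linearMap g) := by
  intro t
  constructor
  · intro ht
    have (j : ι) : ∃ w, i w = t j := (h _).1 congr($ht j)
    choose w hw using this
    change t ∈ LinearMap.range _
    rw [← t.sum_single]
    exact Submodule.sum_mem _ fun j _ => ⟨Finsupp.single j (w j), by simp [hw]⟩
  · rintro ⟨s, rfl⟩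
    ext j
    exact h.apply_apply_eq_zero (s j)

section RightDualBasis

variable {k : Type u} [CommRing k] [Algebra k B] [Algebra k A] (φ : B →ₐ[k] A)

/-- A dual basis of `A` as a right `B`-module: elements of `A` together with right `B`-linear
coordinates, finitely many of which are nonzero on each element, such that every element of `A` is
the right linear combination of the basis given by its coordinates. -/
structure RightDualBasis (ι : Type*) where
  elem : ι → A
  coord : A →+ ι →₀ B
  coord_mul (x : A) (b : B) (j : ι) : coord (x * φ b) j = coord x j * b
  sum_coord (x : A) : (coord x).sum (fun j b => elem j * φ b) = x

theorem nonempty_rightDualBasis (h : @Module.Projective Bᵐᵒᵖ _ A _ (rightModB φ)) :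
    Nonempty (RightDualBasis φ A) := by
  let _ : Module Bᵐᵒᵖ A := rightModB φ
  obtain ⟨s, hs⟩ := Module.projective_def'.1 h
  refine ⟨{
    elem := id
    coord := (Finsupp.mapRange.addMonoidHom MulOpposite.opAddEquiv.symm.toAddMonoidHom).comp
      s.toAddMonoidHom
    coord_mul := fun x b j => ?_
    sum_coord := fun x => ?_ }⟩
  · exact congr(($(s.map_smul (.op b) x) j).unop)
  · rw [AddMonoidHom.comp_apply, Finsupp.mapRange.addMonoidHom_apply,
      Finsupp.sum_mapRange_index fun j => by simp]
    exact congr($hs x)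

end RightDualBasis

section Induced

variable {k : Type u} [CommRing k] [Algebra k B] [Algebra k A] (φ : B →ₐ[k] A)

/-- The relations `(a * φ b) ⊗ y = a ⊗ (b • y)` cutting `A ⊗_B Y` out of `A ⊗_k Y`. -/
def balancedRel (Y : Type u) [AddCommGroup Y] [Module B Y] [Module k Y] : Submodule A (A ⊗[k] Y) :=
  Submodule.span A {z : A ⊗[k] Y | ∃ (a : A) (b : B) (y : Y),
    z = (a * φ b) ⊗ₜ[k] y - a ⊗ₜ[k] (b • y)}

/-- The induced module `A ⊗_B Y` of a left `B`-module `Y`, as a quotient of `A ⊗_k Y`;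
`relTensor φ X` is the case where `Y` is the restriction of `X`. -/
abbrev InducedModule (Y : Type u) [AddCommGroup Y] [Module B Y] [Module k Y] : Type u :=
  (A ⊗[k] Y) ⧸ balancedRel φ Y

namespace InducedModule

variable {Y : Type u} [AddCommGroup Y] [Module B Y] [Module k Y]

/-- The class of the pure tensor `a ⊗ y` in `A ⊗_B Y`, as a biadditive map. -/
def mk : A →+ Y →+ InducedModule φ Y :=
  AddMonoidHom.mk' (fun a => (balancedRel φ Y).mkQ.toAddMonoidHom.comp
    (TensorProduct.mk k A Y a).toAddMonoidHom) fun a a' => by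
      ext y
      simp

theorem smul_mk (a a' : A) (y : Y) : a • mk φ a' y = mk φ (a * a') y := rfl

theorem mk_mul (a : A) (b : B) (y : Y) : mk φ (a * φ b) y = mk φ a (b • y) :=
  (Submodule.Quotient.eq _).2 (Submodule.subset_span ⟨a, b, y, rfl⟩)

theorem addHom_ext {M : Type*} [AddCommGroup M] {f g : InducedModule φ Y →+ M}
    (h : ∀ a y, f (mk φ a y) = g (mk φ a y)) : f = g := by
  ext z
  obtain ⟨z, rfl⟩ := (balancedRel φ Y).mkQ_surjective z
  induction z with
  | zero => simp
  | tmul a y => exact h a y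
  | add z z' hz hz' => simp only [map_add, hz, hz']

/-- The unit `y ↦ 1 ⊗ y` of the adjunction between induction and restriction. -/
def unit : Y →ₛₗ[(φ : B →+* A)] InducedModule φ Y where
  toFun := mk φ 1
  map_add' := map_add _
  map_smul' b y := by
    rw [← mk_mul, one_mul, RingHom.coe_coe, smul_mk, mul_one]

theorem smul_unit (a : A) (y : Y) : a • unit φ y = mk φ a y :=
  congr(mk φ $(mul_one a) y)

theorem hom_ext {M : Type*} [AddCommGroup M] [Module A M] {f g : InducedModule φ Y →ₗ[A] M}
    (h : f.comp (unit φ) = g.comp (unit φ)) : f = g := by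
  refine LinearMap.toAddMonoidHom_injective (addHom_ext φ fun a y => ?_)
  have hy : f (unit φ y) = g (unit φ y) := congr($h y)
  simp only [LinearMap.toAddMonoidHom_coe, ← smul_unit, map_smul, hy]

theorem eq_top_of_unit_mem {N : Submodule A (InducedModule φ Y)} (h : ∀ y, unit φ y ∈ N) :
    N = ⊤ := by
  rw [← N.ker_mkQ, LinearMap.ker_eq_top]
  exact hom_ext φ (LinearMap.ext fun y => (Submodule.Quotient.mk_eq_zero N).2 (h y))

instance [Module.Finite B Y] : Module.Finite A (InducedModule φ Y) := by
  obtain ⟨s, hs⟩ := Module.Finite.fg_top (R := B) (M := Y)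
  let N := Submodule.span A (unit φ '' (s : Set Y))
  have hN : ⊤ ≤ N.comap (unit φ) :=
    hs ▸ Submodule.span_le.2 fun y hy => Submodule.subset_span ⟨y, hy, rfl⟩
  exact ⟨Submodule.fg_def.2 ⟨_, s.finite_toSet.image _,
    eq_top_of_unit_mem φ fun _ => hN Submodule.mem_top⟩⟩

variable [IsScalarTower k B Y]

/-- The additive map out of `A ⊗_B Y` induced by a biadditive `B`-balanced map on `A × Y`. -/
def liftAddHom {M : Type*} [AddCommGroup M] (f : A →+ Y →+ M)
    (hf : ∀ a b y, f (a * φ b) y = f a (b • y)) : InducedModule φ Y →+ M :=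
  let F : A ⊗[k] Y →+ M := TensorProduct.liftAddHom f fun r a y => by
    rw [Algebra.smul_def, Algebra.commutes, ← φ.commutes, hf, algebraMap_smul]
  QuotientAddGroup.lift (balancedRel φ Y).toAddSubgroup F fun z hz => by
    refine Submodule.closure_induction (zero_mem F.ker) (fun _ _ _ _ => add_mem) ?_ hz
    rintro c _ ⟨a, b, y, rfl⟩
    rw [AddMonoidHom.mem_ker, smul_sub, map_sub, sub_eq_zero]
    change f (c * (a * φ b)) y = f (c * a) (b • y)
    rw [← mul_assoc, hf]

/-- The `A`-linear map `a ⊗ y ↦ a • g y` on `A ⊗_B Y` extending a semilinear map `g` on `Y`. -/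
def lift {M : Type*} [AddCommGroup M] [Module A M] (g : Y →ₛₗ[(φ : B →+* A)] M) :
    InducedModule φ Y →ₗ[A] M :=
  let F : InducedModule φ Y →+ M :=
    liftAddHom φ ((AddMonoidHom.compHom.flip g.toAddMonoidHom).comp
      (Module.toAddMonoidEnd A M).toAddMonoidHom) fun a b y =>
        (mul_smul a (φ b) (g y)).trans congr(a • $(g.map_smulₛₗ b y)).symm
  { F with
    map_smul' := fun c z => DFunLike.congr_fun (addHom_ext φ
      (f := F.comp (DistribSMul.toAddMonoidHom (InducedModule φ Y) c))
      (g := (DistribSMul.toAddMonoidHom M c).comp F) fun a y => mul_smul c a (g y)) z }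

theorem lift_comp_unit {M : Type*} [AddCommGroup M] [Module A M] (g : Y →ₛₗ[(φ : B →+* A)] M) :
    (lift φ g).comp (unit φ) = g :=
  LinearMap.ext fun y => one_smul A (g y)

instance [Module.Projective B Y] : Module.Projective A (InducedModule φ Y) := by
  refine Module.Projective.of_lifting_property'' fun g hg => ?_
  obtain ⟨l, hl⟩ := exists_semilinearMap_lift hg (unit φ (Y := Y))
  refine ⟨lift φ l, hom_ext φ ?_⟩
  rw [LinearMap.comp_assoc, lift_comp_unit, hl, LinearMap.id_comp]

variable {Z : Type u} [AddCommGroup Z] [Module B Z] [Module k Z]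

/-- The map `A ⊗_B Y → A ⊗_B Z` induced by a `B`-linear map `Y → Z`. -/
def map (f : Y →ₗ[B] Z) : InducedModule φ Y →ₗ[A] InducedModule φ Z :=
  lift φ ((unit φ).comp f)

theorem map_mk (f : Y →ₗ[B] Z) (a : A) (y : Y) : map φ f (mk φ a y) = mk φ a (f y) :=
  smul_unit φ a (f y)

theorem map_surjective {g : Y →ₗ[B] Z} (hg : Function.Surjective g) :
    Function.Surjective (map φ g) := by
  refine LinearMap.range_eq_top.1 (eq_top_of_unit_mem φ fun z => ?_)
  obtain ⟨y, rfl⟩ := hg z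
  exact ⟨unit φ y, map_mk φ g 1 y⟩

theorem map_comp_map_eq_zero {W : Type u} [AddCommGroup W] [Module B W] [Module k W]
    [IsScalarTower k B W] {i : W →ₗ[B] Y} {g : Y →ₗ[B] Z} (h : g ∘ₗ i = 0) :
    map φ g ∘ₗ map φ i = 0 := by
  refine LinearMap.toAddMonoidHom_injective (addHom_ext φ fun a w => ?_)
  have hw : g (i w) = 0 := congr($h w)
  simp [map_mk, hw]

section DualBasis

variable {φ} {ι : Type*}

/-- The coordinates on `A ⊗_B Y` given by a right dual basis of `A`; they realize `A ⊗_B Y` as a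
retract of `ι →₀ Y`, naturally in `Y`. -/
noncomputable def coord (e : RightDualBasis φ ι) : InducedModule φ Y →+ ι →₀ Y :=
  liftAddHom φ (AddMonoidHom.flip (AddMonoidHom.mk'
    (fun y => (Finsupp.mapRange.addMonoidHom (AddMonoidHom.smul.flip y)).comp e.coord)
    fun y y' => by ext x j; simp)) fun x b y => by
      ext j
      simp [e.coord_mul, mul_smul]

/-- The retraction `(y j) ↦ ∑ e j ⊗ y j` of the coordinates on `A ⊗_B Y`. -/
noncomputable def ofCoord (e : RightDualBasis φ ι) : (ι →₀ Y) →+ InducedModule φ Y :=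
  Finsupp.liftAddHom fun j => mk φ (e.elem j)

theorem coord_mk_apply (e : RightDualBasis φ ι) (a : A) (y : Y) (j : ι) :
    coord e (mk φ a y) j = e.coord a j • y := rfl

theorem ofCoord_coord (e : RightDualBasis φ ι) (z : InducedModule φ Y) :
    ofCoord e (coord e z) = z := by
  refine DFunLike.congr_fun (addHom_ext φ (f := (ofCoord e).comp (coord e))
    (g := AddMonoidHom.id _) fun a y => ?_) z
  have hcoord : coord e (mk φ a y) = (e.coord a).mapRange (· • y) (zero_smul B y) := rfl
  calc
    ofCoord e (coord e (mk φ a y)) = (e.coord a).sum fun j b => mk φ (e.elem j) (b • y) := by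
      rw [hcoord, ofCoord, Finsupp.liftAddHom_apply, Finsupp.sum_mapRange_index fun j => map_zero _]
    _ = mk φ ((e.coord a).sum fun j b => e.elem j * φ b) y := by
      simp only [← mk_mul, Finsupp.sum, map_sum, AddMonoidHom.finsetSum_apply]
    _ = mk φ a y := by rw [e.sum_coord]

theorem coord_map [IsScalarTower k B Z] (e : RightDualBasis φ ι) (g : Y →ₗ[B] Z)
    (z : InducedModule φ Y) :
    coord e (map φ g z) = Finsupp.mapRange.linearMap g (coord e z) := by
  refine DFunLike.congr_fun (addHom_ext φ
    (f := (coord e).comp (map φ g).toAddMonoidHom)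
    (g := (Finsupp.mapRange.linearMap g).toAddMonoidHom.comp (coord e)) fun a y => ?_) z
  ext j
  simp [map_mk, coord_mk_apply]

theorem map_ofCoord (e : RightDualBasis φ ι) (g : Y →ₗ[B] Z) (t : ι →₀ Y) :
    map φ g (ofCoord e t) = ofCoord e (Finsupp.mapRange.linearMap g t) := by
  simp [ofCoord, Finsupp.sum_mapRange_index, map_finsuppSum, map_mk]

variable [IsScalarTower k B Z]

theorem map_injective (e : RightDualBasis φ ι) {g : Y →ₗ[B] Z}
    (hg : Function.Injective g) :
    Function.Injective (map φ g) := by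
  have hcoord : Function.Injective (coord e : InducedModule φ Y → ι →₀ Y) :=
    Function.LeftInverse.injective (ofCoord_coord e)
  refine Function.Injective.of_comp (f := coord e) ?_
  have hcomp : coord e ∘ map φ g = Finsupp.mapRange.linearMap g ∘ coord e :=
    funext (coord_map e g)
  rw [hcomp]
  exact (Finsupp.mapRange_injective g (map_zero g) hg).comp hcoord

theorem map_exact {W : Type u} [AddCommGroup W] [Module B W] [Module k W] [IsScalarTower k B W]
    (e : RightDualBasis φ ι) {i : W →ₗ[B] Y} {g : Y →ₗ[B] Z}
    (h : Function.Exact i g) :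
    Function.Exact (map φ i) (map φ g) := by
  refine LinearMap.exact_of_comp_eq_zero_of_ker_le_range
    (map_comp_map_eq_zero φ h.linearMap_comp_eq_zero) fun z hz => ?_
  have hcoord : Finsupp.mapRange.linearMap g (coord e z) = 0 := by
    rw [← coord_map, LinearMap.mem_ker.1 hz, map_zero]
  obtain ⟨t, ht⟩ := (exact_finsupp_mapRange_linearMap h ι _).1 hcoord
  exact ⟨ofCoord e t, by rw [map_ofCoord, ht, ofCoord_coord]⟩

end DualBasis

end InducedModule

theorem hasProjectiveDimensionLE_inducedModule {φ : B →ₐ[k] A} {ι : Type*}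
    (e : RightDualBasis φ ι) {n : ℕ} {Y : ModuleCat.{u} B} [Module k Y] [IsScalarTower k B Y]
    (hY : HasProjectiveDimensionLE Y n) :
    HasProjectiveDimensionLE (ModuleCat.of A (InducedModule φ Y)) n := by
  induction n generalizing Y with
  | zero =>
    have : Module.Projective B Y := (hasProjectiveDimensionLE_zero_iff Y).1 hY
    exact (hasProjectiveDimensionLE_zero_iff _).2
      (inferInstanceAs (Module.Projective A (InducedModule φ Y)))
  | succ n ih =>
    let g : (Y →₀ B) →ₗ[B] Y := Finsupp.linearCombination B id
    have hg : Function.Surjective g := Finsupp.linearCombination_id_surjective B Y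
    have hF : Projective (ModuleCat.of B (Y →₀ B)) := (IsProjective.iff_projective _).1
      (inferInstanceAs (Module.Projective B (Y →₀ B)))
    have hK : HasProjectiveDimensionLE (ModuleCat.of B (LinearMap.ker g)) n :=
      ((LinearMap.shortExact_shortComplexKer hg).hasProjectiveDimensionLT_X₃_iff n hF).1 hY
    have hAF : Projective (ModuleCat.of A (InducedModule φ (Y →₀ B))) :=
      (IsProjective.iff_projective _).1
        (inferInstanceAs (Module.Projective A (InducedModule φ (Y →₀ B))))
    have hexact := InducedModule.map_exact e (W := LinearMap.ker g)
      (LinearMap.exact_subtype_ker_map g)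
    have hS := ModuleCat.shortComplex_shortExact
      (ModuleCat.shortComplexOfCompEqZero _ _ hexact.linearMap_comp_eq_zero) hexact
      (InducedModule.map_injective e Subtype.val_injective) (InducedModule.map_surjective φ hg)
    exact (hS.hasProjectiveDimensionLT_X₃_iff n hAF).2 (ih hK)

end Induced

section Relative

variable {k : Type u} [CommRing k] [Algebra k B] [Algebra k A] (φ : B →ₐ[k] A)

theorem hasProjectiveDimensionLE_relTensor (hA : @Module.Projective Bᵐᵒᵖ _ A _ (rightModB φ))
    {n : ℕ} {X : ModuleCat.{u} A} (hX : HasProjectiveDimensionLE (resMod φ X) n) :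
    HasProjectiveDimensionLE (relTensor φ X) n := by
  obtain ⟨e⟩ := nonempty_rightDualBasis φ hA
  exact hasProjectiveDimensionLE_inducedModule e hX

theorem finite_relTensor (X : ModuleCat.{u} A) [Module.Finite B (resMod φ X)] :
    Module.Finite A (relTensor φ X) :=
  inferInstanceAs (Module.Finite A (InducedModule φ (resMod φ X)))

/-- The unit `x ↦ 1 ⊗ x` of the adjunction between induction and restriction. -/
def relUnit (X : ModuleCat.{u} A) : X →+ relTensor φ X :=
  (InducedModule.unit φ (Y := resMod φ X)).toAddMonoidHom

theorem relUnit_smul (X : ModuleCat.{u} A) (b : B) (x : X) :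
    relUnit φ X (φ b • x) = φ b • relUnit φ X x :=
  (InducedModule.unit φ (Y := resMod φ X)).map_smulₛₗ b x

variable {φ}

theorem relTensor_hom_ext {X M : ModuleCat.{u} A} {f g : relTensor φ X →ₗ[A] M}
    (h : ∀ x, f (relUnit φ X x) = g (relUnit φ X x)) : f = g :=
  InducedModule.hom_ext φ (Y := resMod φ X) (LinearMap.ext h)

/-- The `A`-linear map `a ⊗ x ↦ a • h x` on `A ⊗_B X` extending a `B`-linear map `h` on `X`. -/
def relTensorLift {X M : ModuleCat.{u} A} (h : X →+ M) (hh : ∀ (b : B) x, h (φ b • x) = φ b • h x) :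
    relTensor φ X →ₗ[A] M :=
  InducedModule.lift φ (Y := resMod φ X) { h with map_smul' := hh }

theorem relTensorLift_relUnit {X M : ModuleCat.{u} A} (h : X →+ M)
    (hh : ∀ (b : B) x, h (φ b • x) = φ b • h x) (x : X) :
    relTensorLift h hh (relUnit φ X x) = h x :=
  one_smul A (h x)

theorem exists_relTensor_lift {X P M : ModuleCat.{u} A} {g : P →ₗ[A] M}
    (hg : Function.Surjective g) (hs : RelSplitB φ g) (f : relTensor φ X →ₗ[A] M) :
    ∃ l : relTensor φ X →ₗ[A] P, g ∘ₗ l = f := by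
  obtain ⟨s, hs, hgs⟩ := hs
  have hgs (y : M) : g (s y) = y := by
    obtain ⟨p, rfl⟩ := hg y
    exact hgs p
  refine ⟨relTensorLift ((s.comp f.toAddMonoidHom).comp (relUnit φ X)) fun b x => ?_,
    relTensor_hom_ext fun x => ?_⟩
  · simp only [AddMonoidHom.comp_apply, LinearMap.toAddMonoidHom_coe, relUnit_smul, map_smul, hs]
  · exact (congrArg g (relTensorLift_relUnit _ _ x)).trans (hgs _)

theorem RelProjective.exists_lift {T P M : ModuleCat.{u} A} (hT : RelProjective φ T)
    {g : P →ₗ[A] M} (hg : Function.Surjective g) (hs : RelSplitB φ g) (f : T →ₗ[A] M) :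
    ∃ l : T →ₗ[A] P, g ∘ₗ l = f := by
  obtain ⟨i, p, hpi⟩ := hT
  obtain ⟨l, hl⟩ := exists_relTensor_lift hg hs (f ∘ₗ p)
  exact ⟨l ∘ₗ i, by rw [← LinearMap.comp_assoc, hl, LinearMap.comp_assoc, hpi, LinearMap.comp_id]⟩

variable (φ)

/-- The counit `a ⊗ x ↦ a • x` of the adjunction between induction and restriction. -/
def relCounit (X : ModuleCat.{u} A) : relTensor φ X →ₗ[A] X :=
  relTensorLift (AddMonoidHom.id X) fun _ _ => rfl

theorem relCounit_relUnit (X : ModuleCat.{u} A) (x : X) : relCounit φ X (relUnit φ X x) = x :=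
  relTensorLift_relUnit _ _ x

theorem relCounit_surjective (X : ModuleCat.{u} A) : Function.Surjective (relCounit φ X) :=
  fun x => ⟨relUnit φ X x, relCounit_relUnit φ X x⟩

theorem relSplitB_relCounit (X : ModuleCat.{u} A) : RelSplitB φ (relCounit φ X) :=
  ⟨relUnit φ X, relUnit_smul φ X, fun _ => relCounit_relUnit φ X _⟩

theorem relProjective_relTensor (X : ModuleCat.{u} A) : RelProjective φ (relTensor φ X) := by
  obtain ⟨i, hi⟩ := exists_relTensor_lift (relCounit_surjective φ _) (relSplitB_relCounit φ _)
    LinearMap.id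
  exact ⟨i, relCounit φ _, hi⟩

/-- The relative syzygy of `X`: the kernel of the counit `A ⊗_B X → X`. -/
noncomputable def relSyzygy (X : ModuleCat.{u} A) : ModuleCat.{u} A :=
  ModuleCat.of A (LinearMap.ker (relCounit φ X))

/-- `X` is a direct summand of `Z ⊕ Q` for some `(A,B)`-projective module `Q`; equivalently, the
identity of `X` factors through `Z` up to a map factoring through an `(A,B)`-projective module. -/
def IsRelStableRetract (X Z : ModuleCat.{u} A) : Prop :=
  ∃ Q : ModuleCat.{u} A, RelProjective φ Q ∧ ∃ (i : X →ₗ[A] Z) (p : Z →ₗ[A] X) (j : X →ₗ[A] Q)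
    (q : Q →ₗ[A] X), p ∘ₗ i + q ∘ₗ j = LinearMap.id

variable {φ}

theorem IsRelStableRetract.refl (X : ModuleCat.{u} A) : IsRelStableRetract φ X X :=
  ⟨_, relProjective_relTensor φ X, .id, .id, 0, 0, by simp⟩

theorem IsRelStableRetract.relProjective {X Z : ModuleCat.{u} A} (h : IsRelStableRetract φ X Z)
    (hZ : RelProjective φ Z) : RelProjective φ X := by
  obtain ⟨Q, hQ, i, p, j, q, hid⟩ := h
  obtain ⟨p', hp⟩ := hZ.exists_lift (relCounit_surjective φ X) (relSplitB_relCounit φ X) p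
  obtain ⟨q', hq⟩ := hQ.exists_lift (relCounit_surjective φ X) (relSplitB_relCounit φ X) q
  refine ⟨p' ∘ₗ i + q' ∘ₗ j, relCounit φ X, ?_⟩
  rw [LinearMap.comp_add, ← LinearMap.comp_assoc, ← LinearMap.comp_assoc, hp, hq, hid]

/-- A relative form of Schanuel's lemma. -/
theorem IsRelStableRetract.ker {X Z P T : ModuleCat.{u} A} (h : IsRelStableRetract φ X Z)
    (hT : RelProjective φ T) {ε : T →ₗ[A] X} (hε : Function.Surjective ε) (hεs : RelSplitB φ ε)
    (hP : RelProjective φ P) {g : P →ₗ[A] Z} (hg : Function.Surjective g) (hgs : RelSplitB φ g) :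
    IsRelStableRetract φ (ModuleCat.of A (LinearMap.ker ε)) (ModuleCat.of A (LinearMap.ker g)) := by
  obtain ⟨Q, hQ, i, p, j, q, hid⟩ := h
  obtain ⟨α, hα⟩ := hT.exists_lift hg hgs (i ∘ₗ ε)
  obtain ⟨β, hβ⟩ := hP.exists_lift hε hεs (p ∘ₗ g)
  obtain ⟨γ, hγ⟩ := hQ.exists_lift hε hεs q
  -- On `ker ε` this is the defect `id - β ∘ α` of the comparison maps; it factors through `T`.
  let θ : T →ₗ[A] T := LinearMap.id - β ∘ₗ α - γ ∘ₗ j ∘ₗ ε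
  have hα' (t : T) : g (α t) = i (ε t) := congr($hα t)
  have hβ' (y : P) : ε (β y) = p (g y) := congr($hβ y)
  have hγ' (y : Q) : ε (γ y) = q y := congr($hγ y)
  have hid' (x : X) : p (i x) + q (j x) = x := congr($hid x)
  have hθ (t : T) : ε (θ t) = 0 := by
    have : ε (θ t) = ε t - p (i (ε t)) - q (j (ε t)) := by simp [θ, hα', hβ', hγ']
    rw [this, sub_sub, hid', sub_self]
  refine ⟨T, hT, α.restrict fun t ht => ?_, β.restrict fun y hy => ?_, (LinearMap.ker ε).subtype,
    θ.codRestrict _ hθ, ?_⟩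
  · rw [LinearMap.mem_ker, hα', LinearMap.mem_ker.1 ht, map_zero]
  · rw [LinearMap.mem_ker, hβ', LinearMap.mem_ker.1 hy, map_zero]
  · refine LinearMap.ext fun t => Subtype.ext ?_
    have ht : ε t = 0 := t.2
    change β (α t) + (t - β (α t) - γ (j (ε t))) = t
    rw [ht, map_zero, map_zero]
    abel

theorem RelProjDimLE.relProjective_iterate_relSyzygy {n : ℕ} {X Z : ModuleCat.{u} A}
    (hZ : RelProjDimLE φ n Z) (h : IsRelStableRetract φ X Z) :
    RelProjective φ ((relSyzygy φ)^[n] X) := by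
  induction n generalizing X Z with
  | zero => exact h.relProjective hZ
  | succ n ih =>
    obtain ⟨P, g, hP, -, hg, hgs, hK⟩ := hZ
    exact ih hK (h.ker (relProjective_relTensor φ X) (relCounit_surjective φ X)
      (relSplitB_relCounit φ X) hP hg hgs)

theorem RelProjective.hasProjectiveDimensionLE {X : ModuleCat.{u} A} (hX : RelProjective φ X)
    {m : ℕ} (hm : HasProjectiveDimensionLE (relTensor φ X) m) : HasProjectiveDimensionLE X m := by
  obtain ⟨i, p, hpi⟩ := hX
  exact hasProjectiveDimensionLE_of_comp_eq_id hpi m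

theorem hasProjectiveDimensionLE_of_relProjective_iterate_relSyzygy {m n : ℕ} {X : ModuleCat.{u} A}
    (hm : ∀ i ≤ n, HasProjectiveDimensionLE (relTensor φ ((relSyzygy φ)^[i] X)) m)
    (hn : RelProjective φ ((relSyzygy φ)^[n] X)) : HasProjectiveDimensionLE X (m + n) := by
  induction n generalizing X with
  | zero => exact hn.hasProjectiveDimensionLE (hm 0 le_rfl)
  | succ n ih =>
    have hT : HasProjectiveDimensionLE (relTensor φ X) m := hm 0 (Nat.zero_le _)
    exact (LinearMap.shortExact_shortComplexKer
      (relCounit_surjective φ X)).hasProjectiveDimensionLT_X₃ (m + n + 1)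
      (ih (fun i hi => hm (i + 1) (by lia)) hn)
      (hasProjectiveDimensionLT_of_ge _ (m + 1) _ (by lia))

variable (φ)

theorem finite_relSyzygy [IsNoetherianRing A] (X : ModuleCat.{u} A)
    [Module.Finite A (relTensor φ X)] : Module.Finite A (relSyzygy φ X) :=
  inferInstanceAs (Module.Finite A (LinearMap.ker (relCounit φ X)))

theorem hasProjectiveDimensionLE_relSyzygy {X : ModuleCat.{u} A} {l m : ℕ}
    (hX : HasProjectiveDimensionLE X l) (hT : HasProjectiveDimensionLE (relTensor φ X) m) :
    HasProjectiveDimensionLE (relSyzygy φ X) (m + l) :=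
  (LinearMap.shortExact_shortComplexKer
    (relCounit_surjective φ X)).hasProjectiveDimensionLT_X₁ (m + l + 1)
    (hasProjectiveDimensionLT_of_ge _ (m + 1) _ (by lia))
    (hasProjectiveDimensionLT_of_ge _ (l + 1) _ (by lia))

end Relative

theorem statement8_general {k : Type u} [CommRing k] {B A : Type u} [Ring B] [Ring A]
    [Algebra k B] [Algebra k A] [IsNoetherianRing B] (φ : B →ₐ[k] A) (n m : ℕ)
    (hA : Module.Finite B (resMod φ (ModuleCat.of A A)))
    (hfd : ∀ X : ModuleCat.{u} A, Module.Finite A X → (∃ l : ℕ, ProjDimLE A l X) →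
      RelProjDimLE φ n X)
    (hpdBA : ∃ d : ℕ, ProjDimLE B d (resMod φ (ModuleCat.of A A)))
    (hprojright : @Module.Projective Bᵐᵒᵖ _ A _ (rightModB φ))
    (hfinB : ∀ Y : ModuleCat.{u} B, Module.Finite B Y → (∃ l : ℕ, ProjDimLE B l Y) →
      ProjDimLE B m Y)
    (X : ModuleCat.{u} A) (hX : Module.Finite A X) (hpdX : ∃ l : ℕ, ProjDimLE A l X) :
    ProjDimLE A (m + n) X := by
  have := isNoetherianRing_of_finite_resMod φ hA
  obtain ⟨d, hd⟩ := hpdBA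
  have hT (Y : ModuleCat.{u} A) (hY : Module.Finite A Y ∧ ∃ l, ProjDimLE A l Y) :
      HasProjectiveDimensionLE (relTensor φ Y) m := by
    obtain ⟨_, l, hl⟩ := hY
    have := finite_resMod φ hA Y
    have hresY := hl.hasProjectiveDimensionLE_resMod φ hd.hasProjectiveDimensionLE
    exact hasProjectiveDimensionLE_relTensor φ hprojright
      (hfinB _ this ⟨d + l, .of_hasProjectiveDimensionLE hresY⟩).hasProjectiveDimensionLE
  have hΩ (Y : ModuleCat.{u} A) (hY : Module.Finite A Y ∧ ∃ l, ProjDimLE A l Y) :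
      Module.Finite A (relSyzygy φ Y) ∧ ∃ l, ProjDimLE A l (relSyzygy φ Y) := by
    have hTY := hT Y hY
    obtain ⟨_, l, hl⟩ := hY
    have := finite_resMod φ hA Y
    have := finite_relTensor φ Y
    have := finite_relSyzygy φ Y
    exact ⟨this, m + l, .of_hasProjectiveDimensionLE
      (hasProjectiveDimensionLE_relSyzygy φ hl.hasProjectiveDimensionLE hTY)⟩
  have hΩi (i : ℕ) : Module.Finite A ((relSyzygy φ)^[i] X) ∧
      ∃ l, ProjDimLE A l ((relSyzygy φ)^[i] X) :=
    Function.Iterate.rec (fun Y : ModuleCat.{u} A => Module.Finite A Y ∧ ∃ l, ProjDimLE A l Y)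
      ⟨hX, hpdX⟩ hΩ i
  exact .of_hasProjectiveDimensionLE (hasProjectiveDimensionLE_of_relProjective_iterate_relSyzygy
    (fun i _ => hT _ (hΩi i)) ((hfd X hX hpdX).relProjective_iterate_relSyzygy (.refl X)))

/-- If `2 ≤ fd(φ) = n < ∞`, `A` has finite projective dimension as a left
`B`-module, `A` is projective as a right `B`-module, and `fin.dim B = m < ∞`, then
`fin.dim A` is finite and `fin.dim A ≤ m + n`. -/
theorem statement8 (φ : B →ₐ[R] A) (n m : ℕ) (hn : 2 ≤ n)
    (hfd_ub : ∀ X : ModuleCat.{u} A, Module.Finite A X →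
      (∃ k : ℕ, ProjDimLE A k X) → RelProjDimLE φ n X)
    (hfd_lub : ∀ k : ℕ, (∀ X : ModuleCat.{u} A, Module.Finite A X →
      (∃ l : ℕ, ProjDimLE A l X) → RelProjDimLE φ k X) → n ≤ k)
    (hpdBA : ∃ k : ℕ, ProjDimLE B k (resMod φ (ModuleCat.of A A)))
    (hprojright : @Module.Projective Bᵐᵒᵖ _ A _ (rightModB φ))
    (hfinB_ub : ∀ Y : ModuleCat.{u} B, Module.Finite B Y →
      (∃ k : ℕ, ProjDimLE B k Y) → ProjDimLE B m Y)
    (hfinB_lub : ∀ k : ℕ, (∀ Y : ModuleCat.{u} B, Module.Finite B Y →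
      (∃ l : ℕ, ProjDimLE B l Y) → ProjDimLE B k Y) → m ≤ k) :
    FinFinDim A ∧ ∀ X : ModuleCat.{u} A, Module.Finite A X →
      (∃ k : ℕ, ProjDimLE A k X) → ProjDimLE A (m + n) X := by
  have : IsNoetherianRing B := .of_finite R B
  have h := statement8_general φ n m (finite_resMod_self φ) hfd_ub hpdBA hprojright hfinB_ub
  exact ⟨⟨m + n, h⟩, h⟩
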